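/- For every N > 0 there exists a constant C(N) > 0 with the following property. For every integer n ≥ 1 and every sign choice such that Δ = n² ∓ 4 is a positive nonsquare discriminant, write Δ = f²Δ₀ with Δ₀ the fundamental discriminant of ℚ(√Δ) and f ≥ 1 the conductor. If Δ₀ ≤ N, then |log h_Δ − log n| ≤ C(N) · log log(n + 20), where h_Δ is the class number of the quadratic order O_Δ. -/

import Mathlib

noncomputable section

/-- A complex square root of an integer `d`. -/
def sqrtD (d : ℤ) : ℂ :=
  if 0 ≤ d then ((Real.sqrt d : ℝ) : ℂ) else Complex.I * ((Real.sqrt (-d) : ℝ) : ℂ)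

/-- The element `(Δ + √Δ)/2` generating the quadratic order of discriminant `Δ`. -/
def omegaD (d : ℤ) : ℂ := ((d : ℂ) + sqrtD d) / 2

/-- The quadratic order `O_Δ = ℤ[(Δ + √Δ)/2]` of discriminant `Δ`, as a subring of `ℂ`. -/
def QOrder (d : ℤ) : Subring ℂ := Subring.closure {omegaD d}

/-- The class number `h_Δ`: the order of the (wide) class group of `O_Δ`,
the group of invertible fractional ideals modulo principal fractional ideals. -/
def classNumber (d : ℤ) : ℕ := Nat.card (ClassGroup (QOrder d))

/-- `d` is a fundamental discriminant: the discriminant of the ring of integers of a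
quadratic field. -/
def IsFundamentalDiscriminant (d : ℤ) : Prop :=
  (d % 4 = 1 ∧ Squarefree d) ∨
    (d % 4 = 0 ∧ Squarefree (d / 4) ∧ (d / 4 % 4 = 2 ∨ d / 4 % 4 = 3))

/-!
Let `S` be the quadratic order of discriminant `D` and `R` its suborder `ℤ + f S`, of discriminant
`Δ = f² D`. The exact sequence `1 → Rˣ → Sˣ → (Submodule R S)ˣ → Pic R → Pic S` compares their class
numbers. Since `f S ⊆ R`, invertible `R`-submodules of `S` are determined by their images in
`S / f S`, and the finite ring `R / f S ≅ ℤ / f` has trivial Picard group, so that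
`(Submodule R S)ˣ ≅ (S / f S)ˣ / (ℤ / f)ˣ`, a group of order between `φ(f)` and `f² / φ(f)`.

This gives `h_Δ ≤ h_D f² / φ(f)` and `φ(f) ≤ h_Δ [Sˣ : Rˣ]`. The special shape `Δ = n² ∓ 4` makes
`ε = (n + √Δ) / 2` a unit of `R` which is at most `n + 1`; as no unit of `S` lies strictly between
`1` and `3 / 2`, the unit index is at most `log ε / log (3 / 2) = O(log n)`. For fixed `D`, both
`n / f` and `f / n` are bounded, while `φ(f) ≥ f / (log₂ f + 1)`, so `h_Δ` and `n` agree up to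
factors `O((log n)²)`.
-/

open Function Module

section ConductorSquare

variable {R S A : Type*} [CommRing R] [CommRing S] [CommRing A] [Algebra R S] [Algebra R A]
  {φ : S →ₐ[R] A}

theorem ker_mul_le (φ : S →ₐ[R] A) (I : Submodule R S) :
    LinearMap.ker φ.toLinearMap * I ≤ LinearMap.ker φ.toLinearMap :=
  Submodule.mul_le.2 fun z hz x _ ↦ by
    have hz : φ z = 0 := hz
    simp [hz]

theorem ker_le_of_isUnit (hφ : LinearMap.ker φ.toLinearMap ≤ 1) {I : Submodule R S}
    (hI : IsUnit I) : LinearMap.ker φ.toLinearMap ≤ I := by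
  obtain ⟨J, hJI⟩ := hI.exists_left_inv
  calc
    LinearMap.ker φ.toLinearMap = LinearMap.ker φ.toLinearMap * J * I := by
      rw [mul_assoc, hJI, mul_one]
    _ ≤ 1 * I := mul_le_mul' ((ker_mul_le φ J).trans hφ) le_rfl
    _ = I := one_mul I

theorem unitsMap_mapHom_injective (hφ : LinearMap.ker φ.toLinearMap ≤ 1) :
    Injective (Units.map (Submodule.mapHom φ : Submodule R S →* Submodule R A)) := by
  intro I J hIJ
  have hmap : (I : Submodule R S).map φ.toLinearMap = (J : Submodule R S).map φ.toLinearMap :=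
    congr_arg Units.val hIJ
  have hcomap (K : (Submodule R S)ˣ) :
      ((K : Submodule R S).map φ.toLinearMap).comap φ.toLinearMap = K := by
    rw [Submodule.comap_map_eq, sup_eq_left.2 (ker_le_of_isUnit hφ K.isUnit)]
  exact Units.ext (by rw [← hcomap I, ← hcomap J, hmap])

theorem comap_mul_comap_eq_one (hφ : LinearMap.ker φ.toLinearMap ≤ 1) (hsurj : Surjective φ)
    {I J : Submodule R A} (hIJ : I * J = 1) :
    I.comap φ.toLinearMap * J.comap φ.toLinearMap = 1 := by
  set c := LinearMap.ker φ.toLinearMap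
  set I' := I.comap φ.toLinearMap
  set J' := J.comap φ.toLinearMap
  have hI : c ≤ I' := LinearMap.ker_le_comap _
  have hJ : c ≤ J' := LinearMap.ker_le_comap _
  have hsup : I' * J' ⊔ c = 1 := by
    have hmap : (I' * J').map φ.toLinearMap = (1 : Submodule R S).map φ.toLinearMap := by
      rw [Submodule.map_mul, Submodule.map_one, Submodule.map_comap_eq_of_surjective hsurj,
        Submodule.map_comap_eq_of_surjective hsurj, hIJ]
    rw [← Submodule.comap_map_eq, hmap, Submodule.comap_map_eq, sup_eq_left.2 hφ]
  have hle : c ≤ I' * J' :=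
    calc
      c = c * I' * J' ⊔ c * c := by rw [mul_assoc, ← Submodule.mul_sup, hsup, mul_one]
      _ ≤ I' * J' := sup_le (mul_le_mul' ((ker_mul_le φ I').trans hI) le_rfl) (mul_le_mul' hI hJ)
  rwa [sup_eq_left.2 hle] at hsup

theorem unitsMap_mapHom_surjective (hφ : LinearMap.ker φ.toLinearMap ≤ 1)
    (hsurj : Surjective φ) :
    Surjective (Units.map (Submodule.mapHom φ : Submodule R S →* Submodule R A)) := fun I ↦
  ⟨.mkOfMulEqOne _ _ (comap_mul_comap_eq_one hφ hsurj I.mul_inv),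
    Units.ext (Submodule.map_comap_eq_of_surjective hsurj _)⟩

end ConductorSquare

section FiniteAlgebra

variable {R B : Type*} (A : Type*) [CommRing R] [CommRing B] [CommRing A] [Algebra R B]
  [Algebra B A] [Algebra R A] [IsScalarTower R B A]

/-- Restriction of scalars along a surjection `R → B`, as a multiplicative equivalence. -/
def restrictScalarsMulEquiv (hRB : Surjective (algebraMap R B)) :
    Submodule B A ≃* Submodule R A where
  toFun := Submodule.restrictScalars R
  invFun N := Submodule.span B N
  left_inv := Submodule.span_eq
  right_inv N := by rw [Submodule.restrictScalars_span R B hRB, Submodule.span_eq]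
  map_mul' _ _ := Submodule.restrictScalars_mul

variable (B)

theorem unitsMap_spanSingleton_surjective [Finite B] [FaithfulSMul B A] :
    Surjective (Units.map (Submodule.spanSingleton B (A := A)).toMonoidHom) := fun I ↦ by
  have hI : I ∈ (Submodule.unitsToPic B A).ker := Subsingleton.elim _ _
  rwa [Submodule.ker_unitsToPic] at hI

theorem card_units_submodule_mul_card_units [Finite B] [FaithfulSMul B A] :
    Nat.card (Submodule B A)ˣ * Nat.card Bˣ = Nat.card Aˣ := by
  set σ := Units.map (Submodule.spanSingleton B (A := A)).toMonoidHom
  have hker : σ.ker = (Units.map (algebraMap B A : B →* A)).range := by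
    ext a
    have : σ a = 1 ↔ (B ∙ (a : A)) = 1 := Units.ext_iff
    rw [MonoidHom.mem_ker, this, Submodule.span_singleton_eq_one_iff]
    exact exists_congr fun b ↦ by rw [Units.ext_iff, eq_comm]; rfl
  have hB : Nat.card σ.ker = Nat.card Bˣ := by
    rw [hker]
    exact (Nat.card_congr (MonoidHom.ofInjective
      (Units.map_injective (FaithfulSMul.algebraMap_injective B A))).toEquiv).symm
  have hrange : Nat.card σ.range = Nat.card (Submodule B A)ˣ := by
    rw [MonoidHom.range_eq_top.2 (unitsMap_spanSingleton_surjective B A), Subgroup.card_top]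
  rw [← σ.ker.card_mul_index, Subgroup.index_ker, hB, hrange, mul_comm]

variable {B}

theorem card_units_submodule_mul_card_units_of_surjective {S : Type*} [CommRing S] [Algebra R S]
    [Finite B] [FaithfulSMul B A] (hRB : Surjective (algebraMap R B)) {φ : S →ₐ[R] A}
    (hsurj : Surjective φ) (hφ : LinearMap.ker φ.toLinearMap ≤ 1) :
    Nat.card (Submodule R S)ˣ * Nat.card Bˣ = Nat.card Aˣ := by
  rw [← card_units_submodule_mul_card_units B A,
    Nat.card_congr (Units.mapEquiv (restrictScalarsMulEquiv A hRB)).toEquiv,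
    Nat.card_congr (Equiv.ofBijective _
      ⟨unitsMap_mapHom_injective hφ, unitsMap_mapHom_surjective hφ hsurj⟩)]

end FiniteAlgebra

section PicardSequence

open CommRing

variable (R S : Type*) [CommRing R] [CommRing S] [Algebra R S] [FaithfulSMul R S]

theorem card_pic_le [Finite (Pic S)] [Finite (Submodule R S)ˣ] :
    Nat.card (Pic R) ≤ Nat.card (Pic S) * Nat.card (Submodule R S)ˣ := by
  have hker : Nat.card (Pic.mapAlgebra R S).ker ≤ Nat.card (Submodule R S)ˣ := by
    change Nat.card (relPic R S) ≤ _
    rw [← Submodule.range_unitsToPic]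
    exact Nat.card_le_card_of_surjective _ (Submodule.unitsToPic R S).rangeRestrict_surjective
  rw [← (Pic.mapAlgebra R S).ker.card_mul_index, Subgroup.index_ker, mul_comm]
  exact Nat.mul_le_mul (Subgroup.card_le_card_group _) hker

theorem card_units_submodule_le [Finite (Pic R)]
    (hindex : (Units.map (algebraMap R S).toMonoidHom).range.index ≠ 0) :
    Nat.card (Submodule R S)ˣ ≤
      Nat.card (Pic R) * (Units.map (algebraMap R S).toMonoidHom).range.index := by
  set σ := Units.map (Submodule.spanSingleton R (A := S)).toMonoidHom
  have hle : (Units.map (algebraMap R S).toMonoidHom).range ≤ σ.ker := by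
    rintro _ ⟨u, rfl⟩
    exact Units.ext (Submodule.span_singleton_eq_one_iff.2 ⟨u, rfl⟩)
  have hker : Nat.card (Submodule.unitsToPic R S).ker = σ.ker.index := by
    rw [Submodule.ker_unitsToPic, Subgroup.index_ker]
  rw [← (Submodule.unitsToPic R S).ker.card_mul_index, Subgroup.index_ker, hker, mul_comm]
  exact Nat.mul_le_mul (Subgroup.card_le_card_group _)
    (Nat.le_of_dvd (Nat.pos_of_ne_zero hindex) (Subgroup.index_dvd_of_le hle))

end PicardSequence

section FinitePic

open CommRing

theorem exists_linearEquiv_ideal_mem {A : Type*} [CommRing A] [IsDomain A] {m b : A}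
    (hm : m ≠ 0) (hb : b ≠ 0) {I : Ideal A} (hbI : b ∈ I) (hdvd : ∀ a ∈ I, b ∣ m * a) :
    ∃ J : Ideal A, m ∈ J ∧ Nonempty (I ≃ₗ[A] J) := by
  let mulBy (c : A) : A →ₗ[A] A := LinearMap.mulLeft A c
  -- `J` is the ideal `m b⁻¹ I`.
  let J : Ideal A := (Submodule.map (mulBy m) I).comap (mulBy b)
  have hJ : Submodule.map (mulBy b) J = Submodule.map (mulBy m) I := by
    refine Submodule.map_comap_eq_self ?_
    rintro _ ⟨a, ha, rfl⟩
    obtain ⟨c, hc⟩ := hdvd a ha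
    exact ⟨c, hc.symm⟩
  refine ⟨J, ⟨b, hbI, mul_comm m b⟩, ⟨?_⟩⟩
  exact (Submodule.equivMapOfInjective (mulBy m) (mul_right_injective₀ hm) I).trans
    ((LinearEquiv.ofEq _ _ hJ.symm).trans
      (Submodule.equivMapOfInjective (mulBy b) (mul_right_injective₀ hb) J).symm)

variable (A : Type*) [CommRing A] [IsDomain A] [Module.Finite ℤ A] [Module.Free ℤ A]

theorem exists_forall_dvd_zsmul :
    ∃ m : ℤ, m ≠ 0 ∧ ∀ I : Ideal A, I ≠ ⊥ → ∃ b ∈ I, b ≠ 0 ∧ ∀ a ∈ I, b ∣ m • a := by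
  let basis := Module.Free.chooseBasis ℤ A
  let approx := ClassGroup.finsetApprox basis AbsoluteValue.absIsAdmissible
  refine ⟨∏ r ∈ approx, r, Finset.prod_ne_zero_iff.2 fun r hr h0 ↦
    ClassGroup.finsetApprox.zero_notMem _ _ (h0 ▸ hr), fun I hI ↦ ?_⟩
  obtain ⟨b, hbI, hb0, hmin⟩ := ClassGroup.exists_min (R := ℤ) AbsoluteValue.abs
    (⟨I, mem_nonZeroDivisors_of_ne_zero hI⟩ : nonZeroDivisors (Ideal A))
  refine ⟨b, hbI, hb0, fun a ha ↦ ?_⟩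
  obtain ⟨q, r, hr, hlt⟩ :=
    ClassGroup.exists_mem_finset_approx' basis AbsoluteValue.absIsAdmissible a hb0
  have hqr : r • a = q * b :=
    sub_eq_zero.1 (hmin _ (I.sub_mem (zsmul_mem ha r) (I.mul_mem_left q hbI)) hlt)
  obtain ⟨c, hc⟩ := Finset.dvd_prod_of_mem (fun r : ℤ ↦ r) hr
  rw [hc, mul_comm, mul_smul, hqr]
  exact ⟨c • q, by rw [mul_smul_comm, mul_comm]⟩

theorem finite_pic : Finite (Pic A) := by
  obtain ⟨m, hm, hdvd⟩ := exists_forall_dvd_zsmul A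
  have hmA : (m : A) ≠ 0 := by
    rw [← zsmul_one]
    exact smul_ne_zero hm one_ne_zero
  have hideal (P : Pic A) : ∃ J : Ideal A, (m : A) ∈ J ∧ Nonempty (P ≃ₗ[A] J) := by
    obtain ⟨I, ⟨e⟩⟩ := Module.Invertible.exists_linearEquiv_ideal A P
    have hI : I ≠ ⊥ := by
      rintro rfl
      have := e.toEquiv.subsingleton
      exact not_subsingleton A (Module.Invertible.linearEquiv A P).symm.toEquiv.subsingleton
    obtain ⟨b, hbI, hb, hbdvd⟩ := hdvd I hI
    obtain ⟨J, hmJ, ⟨e'⟩⟩ := exists_linearEquiv_ideal_mem hmA hb hbI fun a ha ↦ by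
      rw [← zsmul_eq_mul]
      exact hbdvd a ha
    exact ⟨J, hmJ, ⟨e.trans e'⟩⟩
  choose J hmJ e using hideal
  have := (Ring.HasFiniteQuotients.finite_setOfPred_mem (m : A) hmA).to_subtype
  refine Finite.of_injective (fun P ↦ (⟨J P, hmJ P⟩ : {I : Ideal A | (m : A) ∈ I})) fun P Q hPQ ↦ ?_
  have hJ : J P = J Q := congr_arg Subtype.val hPQ
  exact Pic.ext_iff.2 ⟨(e P).some.trans ((LinearEquiv.ofEq _ _ hJ).trans (e Q).some.symm)⟩

end FinitePic

section FiniteRing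

theorem card_units_eq_card_ker_mul {A B : Type*} [CommRing A] [CommRing B] {π : A →+* B}
    [IsLocalHom π] (hπ : Surjective π) :
    Nat.card Aˣ = Nat.card (RingHom.ker π) * Nat.card Bˣ := by
  set ρ : Aˣ →* Bˣ := Units.map π
  have hker : Nat.card ρ.ker = Nat.card (RingHom.ker π) := by
    have hone (x : RingHom.ker π) : π (1 + x) = 1 := by
      rw [map_add, RingHom.mem_ker.1 x.2, map_one, add_zero]
    have hunit (x : RingHom.ker π) : IsUnit (1 + x : A) :=
      isUnit_of_map_unit π _ ((hone x).symm ▸ isUnit_one)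
    have hmem (u : ρ.ker) : π (u : Aˣ) = 1 := congr_arg Units.val (MonoidHom.mem_ker.1 u.2)
    exact Nat.card_congr
      { toFun u := ⟨(u : Aˣ) - 1, by rw [RingHom.mem_ker, map_sub, hmem, map_one, sub_self]⟩
        invFun x := ⟨(hunit x).unit, Units.ext (hone x)⟩
        left_inv u := Subtype.ext (Units.ext (by simp))
        right_inv x := Subtype.ext (by simp) }
  have hsurj : Surjective ρ := fun b ↦ by
    obtain ⟨a, ha⟩ := hπ b
    exact ⟨(isUnit_of_map_unit π a (ha ▸ b.isUnit)).unit, Units.ext ha⟩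
  rw [← ρ.ker.card_mul_index, Subgroup.index_ker, hker, MonoidHom.range_eq_top.2 hsurj,
    Subgroup.card_top]

theorem card_eq_card_ker_mul {A B : Type*} [CommRing A] [CommRing B] {π : A →+* B}
    (hπ : Surjective π) : Nat.card A = Nat.card (RingHom.ker π) * Nat.card B := by
  rw [← π.toAddMonoidHom.ker.card_mul_index, AddSubgroup.index_ker,
    AddMonoidHom.range_eq_top.2 hπ, AddSubgroup.card_top]
  rfl

section ResidueFields

variable (A : Type*) [CommRing A]

/-- The reduction map from a ring to the product of its residue fields. -/
def toPiResidueField : A →+* ∀ m : MaximalSpectrum A, A ⧸ m.asIdeal :=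
  RingHom.pi fun m ↦ Ideal.Quotient.mk m.asIdeal

instance isLocalHom_toPiResidueField : IsLocalHom (toPiResidueField A) where
  map_nonunit a ha := by
    by_contra hna
    obtain ⟨m, hm, ham⟩ := exists_max_ideal_of_mem_nonunits hna
    have hunit : IsUnit (Ideal.Quotient.mk m a) :=
      ha.map (Pi.evalRingHom (fun m : MaximalSpectrum A ↦ A ⧸ m.asIdeal) ⟨m, hm⟩)
    rw [Ideal.Quotient.eq_zero_iff_mem.2 ham] at hunit
    exact hm.ne_top (Ideal.Quotient.zero_eq_one_iff.1 (isUnit_zero_iff.1 hunit))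

theorem surjective_toPiResidueField [Finite (MaximalSpectrum A)] :
    Surjective (toPiResidueField A) := fun x ↦ by
  obtain ⟨a, ha⟩ := Ideal.pi_quotient_surjective
    (fun m m' hmm' ↦ Ideal.isCoprime_of_isMaximal (mt MaximalSpectrum.ext hmm')) x
  exact ⟨a, funext ha⟩

theorem card_units_eq_card_mul_prod [Finite A] [Fintype (MaximalSpectrum A)] :
    (Nat.card Aˣ : ℚ) =
      Nat.card A * ∏ m : MaximalSpectrum A, (1 - (Nat.card (A ⧸ m.asIdeal) : ℚ)⁻¹) := by
  have hfield (m : MaximalSpectrum A) :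
      (Nat.card (A ⧸ m.asIdeal)ˣ : ℚ) =
        Nat.card (A ⧸ m.asIdeal) * (1 - (Nat.card (A ⧸ m.asIdeal) : ℚ)⁻¹) := by
    let := Ideal.Quotient.field m.asIdeal
    have : Finite (A ⧸ m.asIdeal) := Quotient.finite _
    have hpos : 0 < Nat.card (A ⧸ m.asIdeal) := Nat.card_pos
    rw [Nat.card_units, Nat.cast_pred hpos]
    field_simp
  have hunits : Nat.card (∀ m : MaximalSpectrum A, A ⧸ m.asIdeal)ˣ =
      ∏ m : MaximalSpectrum A, Nat.card (A ⧸ m.asIdeal)ˣ := by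
    rw [Nat.card_congr MulEquiv.piUnits.toEquiv, Nat.card_pi]
  rw [card_units_eq_card_ker_mul (surjective_toPiResidueField A), hunits,
    card_eq_card_ker_mul (surjective_toPiResidueField A), Nat.card_pi]
  push_cast
  rw [Finset.prod_congr rfl fun m _ ↦ hfield m, Finset.prod_mul_distrib, mul_assoc]

end ResidueFields

theorem card_quotient_span_natCast (S : Type*) [CommRing S] [Module.Free ℤ S] [Module.Finite ℤ S]
    {n : ℕ} (hn : n ≠ 0) : Nat.card (S ⧸ Ideal.span {(n : S)}) = n ^ finrank ℤ S := by
  have hinj : Injective (LinearMap.lsmul ℤ S n) := smul_right_injective S (Nat.cast_ne_zero.2 hn)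
  have hrange : LinearMap.range (LinearMap.lsmul ℤ S n) =
      (Ideal.span {(n : S)}).restrictScalars ℤ := by
    ext x
    simp [Ideal.mem_span_singleton', mul_comm]
  have hdet := Submodule.natAbs_det_equiv _ (LinearEquiv.ofInjective _ hinj)
  have hcomp : (LinearMap.range (LinearMap.lsmul ℤ S n)).subtype ∘ₗ
      ((LinearEquiv.ofInjective _ hinj : S →+ _).toIntLinearMap) =
        (n : ℤ) • (LinearMap.id : S →ₗ[ℤ] S) := rfl
  rw [hcomp, LinearMap.det_smul, LinearMap.det_id, hrange] at hdet
  have hcard : Nat.card (S ⧸ (Ideal.span {(n : S)}).restrictScalars ℤ) = n ^ finrank ℤ S := by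
    simpa [Int.natAbs_pow] using hdet.symm
  exact hcard

theorem ringChar_le_card (F : Type*) [Ring F] [Finite F] : ringChar F ≤ Nat.card F :=
  Nat.le_of_dvd Nat.card_pos <| ringChar.dvd <| by rw [← nsmul_one, card_nsmul_eq_zero']

theorem pow_card_le_card_quotient_span {A : Type*} [CommRing A] [Finite A] {p : ℕ}
    (T : Finset (MaximalSpectrum A))
    (hT : ∀ m ∈ T, ringChar (A ⧸ m.asIdeal) = p) :
    p ^ T.card ≤ Nat.card (A ⧸ Ideal.span {(p : A)}) := by
  let reduction : A →+* ∀ m : T, A ⧸ m.1.asIdeal :=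
    RingHom.pi fun m ↦ Ideal.Quotient.mk m.1.asIdeal
  have hreduction : Surjective reduction := fun x ↦ by
    obtain ⟨a, ha⟩ := Ideal.pi_quotient_surjective (I := fun m : T ↦ m.1.asIdeal)
      (fun m m' hmm' ↦ Ideal.isCoprime_of_isMaximal
        fun h ↦ hmm' (Subtype.ext (MaximalSpectrum.ext h))) x
    exact ⟨a, funext ha⟩
  have hp : reduction p = 0 := by
    ext m
    rw [map_natCast, Pi.natCast_apply, Pi.zero_apply, ← hT m m.2, ringChar.Nat.cast_ringChar]
  have hspan : Ideal.span {(p : A)} ≤ RingHom.ker reduction :=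
    (Ideal.span_singleton_le_iff_mem _).2 hp
  have hle (m : T) : p ≤ Nat.card (A ⧸ m.1.asIdeal) := by
    have : Finite (A ⧸ m.1.asIdeal) := Quotient.finite _
    rw [← hT m m.2]
    exact ringChar_le_card _
  calc
    p ^ T.card = ∏ _m : T, p := by simp
    _ ≤ ∏ m : T, Nat.card (A ⧸ m.1.asIdeal) := Finset.prod_le_prod' fun m _ ↦ hle m
    _ = Nat.card (∀ m : T, A ⧸ m.1.asIdeal) := Nat.card_pi.symm
    _ ≤ Nat.card (A ⧸ Ideal.span {(p : A)}) :=
      have : Finite (A ⧸ Ideal.span {(p : A)}) := Quotient.finite _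
      Nat.card_le_card_of_surjective _
        (Ideal.Quotient.lift_surjective_of_surjective _ hspan hreduction)

theorem prod_pow_le_prod_comp {ι κ K : Type*} [Fintype ι] [DecidableEq κ] [CommSemiring K]
    [PartialOrder K] [IsOrderedRing K] {P : Finset κ} {w : κ → K} (hw0 : ∀ p ∈ P, 0 ≤ w p)
    (hw1 : ∀ p ∈ P, w p ≤ 1) {c : ι → κ} (hc : ∀ i, c i ∈ P)
    {d : ℕ} (hd : ∀ p ∈ P, (Finset.univ.filter fun i ↦ c i = p).card ≤ d) :
    (∏ p ∈ P, w p) ^ d ≤ ∏ i, w (c i) :=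
  calc
    (∏ p ∈ P, w p) ^ d = ∏ p ∈ P, w p ^ d := (Finset.prod_pow _ _ _).symm
    _ ≤ ∏ p ∈ P, w p ^ (Finset.univ.filter fun i ↦ c i = p).card :=
        Finset.prod_le_prod (fun p hp ↦ pow_nonneg (hw0 p hp) _) fun p hp ↦
          pow_le_pow_of_le_one (hw0 p hp) (hw1 p hp) (hd p hp)
    _ = ∏ p ∈ P, ∏ i with c i = p, w p := by simp_rw [Finset.prod_const]
    _ = ∏ i, w (c i) := Finset.prod_fiberwise_of_maps_to' (fun i _ ↦ hc i) w

theorem card_mul_prod_pow_le_card_units {A : Type*} [CommRing A] [Finite A] {n d : ℕ} (hn : n ≠ 0)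
    (hnA : (n : A) = 0) (hd : ∀ p ∈ n.primeFactors, Nat.card (A ⧸ Ideal.span {(p : A)}) ≤ p ^ d) :
    (Nat.card A : ℚ) * (∏ p ∈ n.primeFactors, (1 - (p : ℚ)⁻¹)) ^ d ≤ Nat.card Aˣ := by
  classical
  let := Fintype.ofFinite (MaximalSpectrum A)
  let char (m : MaximalSpectrum A) : ℕ := ringChar (A ⧸ m.asIdeal)
  have hresidue (m : MaximalSpectrum A) : Finite (A ⧸ m.asIdeal) := Quotient.finite _
  have hchar (m : MaximalSpectrum A) : char m ∈ n.primeFactors :=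
    Nat.mem_primeFactors.2 ⟨CharP.char_is_prime (A ⧸ m.asIdeal) _, ringChar.dvd (by
      rw [← map_natCast (Ideal.Quotient.mk m.asIdeal), hnA, map_zero]), hn⟩
  have hpos {p : ℕ} (hp : p ∈ n.primeFactors) : 1 ≤ p := (Nat.prime_of_mem_primeFactors hp).one_le
  have hnonneg (p : ℕ) (hp : p ∈ n.primeFactors) : (0 : ℚ) ≤ 1 - (p : ℚ)⁻¹ :=
    sub_nonneg.2 (inv_le_one_of_one_le₀ (by exact_mod_cast hpos hp))
  have hfiber (p : ℕ) (hp : p ∈ n.primeFactors) :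
      (Finset.univ.filter fun m ↦ char m = p).card ≤ d :=
    (Nat.pow_le_pow_iff_right (Nat.prime_of_mem_primeFactors hp).one_lt).1
      ((pow_card_le_card_quotient_span _ fun m hm ↦ (Finset.mem_filter.1 hm).2).trans (hd p hp))
  have hle (m : MaximalSpectrum A) :
      1 - (char m : ℚ)⁻¹ ≤ 1 - (Nat.card (A ⧸ m.asIdeal) : ℚ)⁻¹ := by
    have := ringChar_le_card (A ⧸ m.asIdeal)
    have := hpos (hchar m)
    gcongr
  rw [card_units_eq_card_mul_prod]
  refine mul_le_mul_of_nonneg_left (le_trans ?_ <|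
    Finset.prod_le_prod (fun m _ ↦ hnonneg _ (hchar m)) fun m _ ↦ hle m) (Nat.cast_nonneg _)
  exact prod_pow_le_prod_comp hnonneg (fun p _ ↦ sub_le_self _ (by positivity)) hchar hfiber

theorem totient_pow_finrank_le_card_units (S : Type*) [CommRing S] [Module.Free ℤ S]
    [Module.Finite ℤ S] {n : ℕ} (hn : n ≠ 0) :
    n.totient ^ finrank ℤ S ≤ Nat.card (S ⧸ Ideal.span {(n : S)})ˣ := by
  set A := S ⧸ Ideal.span {(n : S)}
  have hcard : Nat.card A = n ^ finrank ℤ S := card_quotient_span_natCast S hn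
  have : Finite A := Nat.finite_of_card_ne_zero (hcard ▸ pow_ne_zero _ hn)
  have hnA : (n : A) = 0 := Ideal.Quotient.eq_zero_iff_mem.2 (Ideal.mem_span_singleton_self _)
  have hd (p : ℕ) (hp : p ∈ n.primeFactors) :
      Nat.card (A ⧸ Ideal.span {(p : A)}) ≤ p ^ finrank ℤ S := by
    have hp0 : p ≠ 0 := (Nat.prime_of_mem_primeFactors hp).ne_zero
    have hcardp := card_quotient_span_natCast S hp0
    have : Finite (S ⧸ Ideal.span {(p : S)}) :=
      Nat.finite_of_card_ne_zero (hcardp ▸ pow_ne_zero _ hp0)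
    let reduction : S →+* A ⧸ Ideal.span {(p : A)} :=
      (Ideal.Quotient.mk _).comp (Ideal.Quotient.mk _)
    have hspan : Ideal.span {(p : S)} ≤ RingHom.ker reduction :=
      (Ideal.span_singleton_le_iff_mem _).2
        (Ideal.Quotient.eq_zero_iff_mem.2 (Ideal.mem_span_singleton_self _))
    rw [← hcardp]
    exact Nat.card_le_card_of_surjective _ (Ideal.Quotient.lift_surjective_of_surjective _ hspan
      (Ideal.Quotient.mk_surjective.comp Ideal.Quotient.mk_surjective))
  have h := card_mul_prod_pow_le_card_units hn hnA hd
  rw [hcard, Nat.cast_pow, ← mul_pow, ← Nat.totient_eq_mul_prod_factors] at h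
  exact_mod_cast h

end FiniteRing

section Totient

-- The worst case is `A = {2, …, |A| + 1}`, where the product telescopes.
theorem one_div_card_add_one_le_prod_one_sub_inv {A : Finset ℕ} (hA : ∀ p ∈ A, 2 ≤ p) :
    (1 : ℚ) / (A.card + 1) ≤ ∏ p ∈ A, (1 - (p : ℚ)⁻¹) := by
  induction A using Finset.induction_on_max with
  | empty => simp
  | insert a A hlt ih =>
    have haA : a ∉ A := fun h ↦ (hlt a h).false
    have hcard : A.card + 2 ≤ a := by
      have hsub : A ⊆ Finset.Ico 2 a := fun p hp ↦
        Finset.mem_Ico.2 ⟨hA p (Finset.mem_insert_of_mem hp), hlt p hp⟩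
      have hle := Finset.card_le_card hsub
      have ha := hA a (Finset.mem_insert_self _ _)
      rw [Nat.card_Ico] at hle
      omega
    have hcardQ : (A.card : ℚ) + 2 ≤ a := by exact_mod_cast hcard
    have hfactor : ((A.card : ℚ) + 1) / (A.card + 2) ≤ 1 - (a : ℚ)⁻¹ :=
      calc
        ((A.card : ℚ) + 1) / (A.card + 2) = 1 - ((A.card : ℚ) + 2)⁻¹ := by field_simp; ring
        _ ≤ 1 - (a : ℚ)⁻¹ := by gcongr
    rw [Finset.prod_insert haA, Finset.card_insert_of_notMem haA]
    calc
      (1 : ℚ) / ((A.card + 1 : ℕ) + 1) =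
          ((A.card : ℚ) + 1) / (A.card + 2) * (1 / (A.card + 1)) := by
        push_cast
        field_simp
        ring
      _ ≤ (1 - (a : ℚ)⁻¹) * ∏ p ∈ A, (1 - (p : ℚ)⁻¹) :=
        mul_le_mul hfactor (ih fun p hp ↦ hA p (Finset.mem_insert_of_mem hp)) (by positivity)
          (le_trans (by positivity) hfactor)

theorem card_primeFactors_le_log_two {f : ℕ} (hf : f ≠ 0) : f.primeFactors.card ≤ Nat.log 2 f :=
  Nat.le_log_of_pow_le one_lt_two <|
    calc
      2 ^ f.primeFactors.card ≤ ∏ p ∈ f.primeFactors, p :=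
        Finset.pow_card_le_prod _ _ _ fun _ hp ↦ (Nat.prime_of_mem_primeFactors hp).two_le
      _ ≤ f := Nat.le_of_dvd (Nat.pos_of_ne_zero hf) (Nat.prod_primeFactors_dvd f)

theorem le_totient_mul_log_two_add_one {f : ℕ} (hf : f ≠ 0) :
    f ≤ f.totient * (Nat.log 2 f + 1) := by
  have hprod := one_div_card_add_one_le_prod_one_sub_inv (A := f.primeFactors)
    fun _ hp ↦ (Nat.prime_of_mem_primeFactors hp).two_le
  rw [div_le_iff₀ (by positivity)] at hprod
  have hle : (f : ℚ) ≤ f.totient * (f.primeFactors.card + 1) := by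
    rw [Nat.totient_eq_mul_prod_factors, mul_assoc]
    exact le_mul_of_one_le_right (by positivity) hprod
  calc
    f ≤ f.totient * (f.primeFactors.card + 1) := by exact_mod_cast hle
    _ ≤ f.totient * (Nat.log 2 f + 1) := by
      gcongr
      exact card_primeFactors_le_log_two hf

end Totient

section OrderOfConductor

open CommRing

theorem charP_quotient_span_natCast (S : Type*) [CommRing S] [Nontrivial S] [Module.Free ℤ S]
    [Module.Finite ℤ S] {n : ℕ} (hn : n ≠ 0) : CharP (S ⧸ Ideal.span {(n : S)}) n := by
  set A := S ⧸ Ideal.span {(n : S)}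
  set c := ringChar A
  have hcn : c ∣ n :=
    ringChar.dvd (Ideal.Quotient.eq_zero_iff_mem.2 (Ideal.mem_span_singleton_self _))
  have hc : c ≠ 0 := ne_zero_of_dvd_ne_zero hn hcn
  have hspan : Ideal.span {(c : S)} ≤ Ideal.span {(n : S)} :=
    (Ideal.span_singleton_le_iff_mem _).2
      (Ideal.Quotient.eq_zero_iff_mem.1 (ringChar.Nat.cast_ringChar (R := A)))
  have hcard := card_quotient_span_natCast S hc
  have : Finite (S ⧸ Ideal.span {(c : S)}) := Nat.finite_of_card_ne_zero (hcard ▸ pow_ne_zero _ hc)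
  have hle : n ^ finrank ℤ S ≤ c ^ finrank ℤ S := by
    rw [← hcard, ← card_quotient_span_natCast S hn]
    exact Nat.card_le_card_of_surjective _ (Ideal.Quotient.factor_surjective hspan)
  have hnc : n ≤ c := (Nat.pow_le_pow_iff_left finrank_pos.ne').1 hle
  exact ringChar.of_eq (le_antisymm (Nat.le_of_dvd (Nat.pos_of_ne_zero hn) hcn) hnc)

theorem card_units_of_surjective_intCast {B : Type*} [CommRing B] {n : ℕ} [NeZero n] [CharP B n]
    (hB : Surjective (Int.cast : ℤ → B)) : Nat.card Bˣ = n.totient := by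
  have hsurj : Surjective (ZMod.castHom dvd_rfl B) := fun b ↦ by
    obtain ⟨k, rfl⟩ := hB b
    exact ⟨k, map_intCast _ k⟩
  rw [← ZMod.card_units_eq_totient, ← Nat.card_eq_fintype_card]
  exact (Nat.card_congr (Units.mapEquiv (RingEquiv.ofBijective _
    ⟨ZMod.castHom_injective B, hsurj⟩ : ZMod n ≃* B)).toEquiv).symm

/-- `R` is the suborder of conductor `f` of `S`, in the sense that its image is `ℤ + f S`. -/
def IsSuborderOfConductor (R S : Type*) [CommRing R] [CommRing S] [Algebra R S] (f : ℕ) : Prop :=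
  ∀ s : S, s ∈ (algebraMap R S).range ↔ ∃ (k : ℤ) (t : S), s = k + f * t

variable {R S : Type*} [CommRing R] [CommRing S] [Nontrivial S] [Module.Free ℤ S]
  [Module.Finite ℤ S] [Algebra R S] {f : ℕ}

theorem IsSuborderOfConductor.card_units_submodule_mul_totient
    (h : IsSuborderOfConductor R S f) (hf : f ≠ 0) :
    Nat.card (Submodule R S)ˣ * f.totient = Nat.card (S ⧸ Ideal.span {(f : S)})ˣ := by
  have : NeZero f := ⟨hf⟩
  set c := Ideal.span {(f : S)}
  set B := R ⧸ c.comap (algebraMap R S)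
  have : CharP (S ⧸ c) f := charP_quotient_span_natCast S hf
  have hinj : Injective (algebraMap B (S ⧸ c)) := Ideal.algebraMap_quotient_injective
  have : CharP B f := RingHom.charP _ hinj f
  have : FaithfulSMul B (S ⧸ c) := (faithfulSMul_iff_algebraMap_injective _ _).2 hinj
  have : Finite (S ⧸ c) :=
    Nat.finite_of_card_ne_zero (card_quotient_span_natCast S hf ▸ pow_ne_zero _ hf)
  have : Finite B := Finite.of_injective _ hinj
  have hB : Surjective (Int.cast : ℤ → B) := fun b ↦ by
    obtain ⟨r, rfl⟩ := Ideal.Quotient.mk_surjective b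
    obtain ⟨k, t, hkt⟩ := (h _).1 ⟨r, rfl⟩
    refine ⟨k, ?_⟩
    rw [← map_intCast (Ideal.Quotient.mk (c.comap (algebraMap R S))), eq_comm, Ideal.Quotient.eq,
      Ideal.mem_comap, map_sub, hkt, map_intCast, add_sub_cancel_left]
    exact Ideal.mul_mem_right _ _ (Ideal.mem_span_singleton_self _)
  have hker : LinearMap.ker (Ideal.Quotient.mkₐ R c).toLinearMap ≤ 1 := fun s hs ↦ by
    obtain ⟨t, rfl⟩ := Ideal.mem_span_singleton.1 (Ideal.Quotient.eq_zero_iff_mem.1 hs)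
    exact Submodule.mem_one.2 ((h _).2 ⟨0, t, by simp⟩)
  rw [← card_units_of_surjective_intCast hB]
  exact card_units_submodule_mul_card_units_of_surjective (S ⧸ c) Ideal.Quotient.mk_surjective
    (Ideal.Quotient.mkₐ_surjective R c) hker

variable [FaithfulSMul R S]

theorem IsSuborderOfConductor.card_pic_mul_totient_le [Finite (Pic S)]
    (h : IsSuborderOfConductor R S f) (hf : f ≠ 0) :
    Nat.card (Pic R) * f.totient ≤ Nat.card (Pic S) * f ^ finrank ℤ S := by
  have hunits := h.card_units_submodule_mul_totient hf
  have hcard := card_quotient_span_natCast S hf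
  have : Finite (S ⧸ Ideal.span {(f : S)}) :=
    Nat.finite_of_card_ne_zero (hcard ▸ pow_ne_zero _ hf)
  have : Finite (Submodule R S)ˣ :=
    Nat.finite_of_card_ne_zero (left_ne_zero_of_mul (hunits ▸ Nat.card_pos.ne'))
  calc
    Nat.card (Pic R) * f.totient ≤
        Nat.card (Pic S) * Nat.card (Submodule R S)ˣ * f.totient :=
      Nat.mul_le_mul_right _ (card_pic_le R S)
    _ = Nat.card (Pic S) * Nat.card (S ⧸ Ideal.span {(f : S)})ˣ := by rw [mul_assoc, hunits]
    _ ≤ Nat.card (Pic S) * f ^ finrank ℤ S := by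
      rw [← hcard]
      exact Nat.mul_le_mul_left _ (Nat.card_le_card_of_injective _ Units.val_injective)

theorem IsSuborderOfConductor.totient_pow_le [Finite (Pic R)]
    (h : IsSuborderOfConductor R S f) (hf : f ≠ 0)
    (hindex : (Units.map (algebraMap R S).toMonoidHom).range.index ≠ 0) :
    f.totient ^ (finrank ℤ S - 1) ≤
      Nat.card (Pic R) * (Units.map (algebraMap R S).toMonoidHom).range.index := by
  refine le_trans (Nat.le_of_mul_le_mul_right ?_ (Nat.totient_pos.2 (Nat.pos_of_ne_zero hf)))
    (card_units_submodule_le R S hindex)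
  rw [← pow_succ, Nat.sub_add_cancel finrank_pos, h.card_units_submodule_mul_totient hf]
  exact totient_pow_finrank_le_card_units S hf

theorem exists_algebra_of_forall_mem_iff {A : Type*} [CommRing A] {R S : Subring A} {f : ℕ}
    (h : ∀ z, z ∈ R ↔ ∃ k : ℤ, ∃ t ∈ S, z = k + f * t) :
    ∃ _ : Algebra R S, FaithfulSMul R S ∧ IsSuborderOfConductor R S f ∧
      ∀ z : R, (algebraMap R S z : A) = z := by
  have hle : R ≤ S := fun z hz ↦ by
    obtain ⟨k, t, ht, rfl⟩ := (h z).1 hz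
    exact add_mem (intCast_mem _ k) (mul_mem (natCast_mem _ f) ht)
  let := (Subring.inclusion hle).toAlgebra
  refine ⟨this, (faithfulSMul_iff_algebraMap_injective _ _).2 (Subring.inclusion_injective hle),
    fun s ↦ ⟨?_, ?_⟩, fun _ ↦ rfl⟩
  · rintro ⟨z, rfl⟩
    obtain ⟨k, t, ht, hz⟩ := (h z).1 z.2
    exact ⟨k, ⟨t, ht⟩, Subtype.ext hz⟩
  · rintro ⟨k, t, rfl⟩
    exact ⟨⟨k + f * t, (h _).2 ⟨k, t, t.2, rfl⟩⟩, rfl⟩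

end OrderOfConductor

section UnitIndex

theorem index_mul_le_of_forall_le {G : Type*} [AddCommGroup G] (ℓ : G →+ ℝ) {δ : ℝ} (hδ : 0 < δ)
    (hgap : ∀ g, 0 < ℓ g → δ ≤ ℓ g) {H : AddSubgroup G} (hker : ℓ.ker ≤ H) {ε : G} (hε : ε ∈ H)
    (hℓε : 0 < ℓ ε) : H.index ≠ 0 ∧ H.index * δ ≤ ℓ ε := by
  have hdisj : Disjoint (ℓ.range : Set ℝ) (Set.Ioo 0 δ) :=
    Set.disjoint_left.2 fun _ ⟨g, hg⟩ ⟨hpos, hlt⟩ ↦ ((hgap g (hg ▸ hpos)).trans_eq hg).not_gt hlt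
  obtain ⟨b, hb⟩ := AddSubgroup.cyclic_of_isolated_zero hδ hdisj
  have hmem (g : G) : ∃ k : ℤ, k • b = ℓ g :=
    AddSubgroup.mem_closure_singleton.1 (hb ▸ ⟨g, rfl⟩)
  obtain ⟨γ, hγ⟩ : b ∈ ℓ.range := hb ▸ AddSubgroup.mem_closure_singleton.2 ⟨1, one_zsmul b⟩
  obtain ⟨k, hk⟩ := hmem ε
  have hsub (g : G) (j : ℤ) (hj : j • b = ℓ g) : g - j • γ ∈ H :=
    hker (by rw [AddMonoidHom.mem_ker, map_sub, map_zsmul, hγ, hj, sub_self])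
  have hkH : k • γ ∈ H := by
    simpa using sub_mem hε (hsub ε k hk)
  have hsup : H ⊔ (zmultiplesHom G γ).range = ⊤ := top_unique fun g _ ↦ by
    obtain ⟨j, hj⟩ := hmem g
    exact AddSubgroup.mem_sup.2 ⟨_, hsub g j hj, j • γ, ⟨j, rfl⟩, sub_add_cancel _ _⟩
  have hindex : H.index ∣ k.natAbs := by
    rw [← AddSubgroup.relIndex_top_right, ← hsup, AddSubgroup.relIndex_sup_left,
      ← AddSubgroup.index_comap, ← Int.index_zmultiples]
    exact AddSubgroup.index_dvd_of_le (AddSubgroup.zmultiples_le_of_mem hkH)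
  have hk0 : k ≠ 0 := by
    rintro rfl
    simp [← hk] at hℓε
  have hδb : δ ≤ |b| := by
    have hb0 : b ≠ 0 := by
      rintro rfl
      simp [← hk] at hℓε
    rcases abs_choice b with h | h
    · rw [h, ← hγ]
      exact hgap γ (by rw [hγ, ← h]; exact abs_pos.2 hb0)
    · rw [h, ← hγ, ← map_neg]
      exact hgap (-γ) (by rw [map_neg, hγ, ← h]; exact abs_pos.2 hb0)
  refine ⟨ne_zero_of_dvd_ne_zero (Int.natAbs_ne_zero.2 hk0) hindex, ?_⟩
  calc
    H.index * δ ≤ k.natAbs * |b| := by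
      gcongr
      exact Nat.le_of_dvd (Int.natAbs_pos.2 hk0) hindex
    _ = |k • b| := by rw [zsmul_eq_mul, abs_mul, Nat.cast_natAbs, Int.cast_abs]
    _ = ℓ ε := by rw [hk, abs_of_pos hℓε]

-- The smallest such `|x|` is the golden ratio.
theorem three_halves_le_abs_of_sq_eq {x : ℝ} {t : ℤ} {n : ℤˣ}
    (hx : x ^ 2 = t * x - (n : ℤ)) (h1 : 1 < |x|) : 3 / 2 ≤ |x| := by
  by_contra! hlt
  have hprod : 0 < (|x| - 1) * (3 / 2 - |x|) := mul_pos (by linarith) (by linarith)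
  have htx : (|t| : ℤ) * |x| = |x ^ 2 + (n : ℤ)| := by
    rw [Int.cast_abs, ← abs_mul, hx, sub_add_cancel]
  rcases Int.units_eq_one_or n with rfl | rfl
  · have hsq : (|t| : ℤ) * |x| = |x| ^ 2 + 1 := by
      rw [htx, Units.val_one, Int.cast_one, abs_of_pos (by positivity), sq_abs]
    have ht : (2 : ℝ) < (|t| : ℤ) := by nlinarith
    have ht : (3 : ℝ) ≤ (|t| : ℤ) := by exact_mod_cast ht
    nlinarith
  · have hsq : (|t| : ℤ) * |x| = |x| ^ 2 - 1 := by
      rw [htx, Units.val_neg, Units.val_one, Int.cast_neg, Int.cast_one, ← sub_eq_add_neg, ← sq_abs,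
        abs_of_pos (by nlinarith)]
    have ht : (0 : ℝ) < (|t| : ℤ) := by nlinarith
    have ht : (1 : ℝ) ≤ (|t| : ℤ) := by exact_mod_cast ht
    nlinarith

theorem exists_sq_eq_mul_sub_intUnit {S : Type*} [CommRing S] [Module.Free ℤ S] [Module.Finite ℤ S]
    (hrank : finrank ℤ S = 2) (u : Sˣ) :
    ∃ (t : ℤ) (n : ℤˣ), (u : S) ^ 2 = t * (u : S) - ((n : ℤ) : S) := by
  let b := finBasisOfFinrankEq ℤ S hrank
  let M := Algebra.leftMulMatrix b (u : S)
  let n : ℤˣ := Units.map (Algebra.norm ℤ) u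
  have hn : M.det = n := (Algebra.norm_eq_matrix_det b (u : S)).symm
  refine ⟨M.trace, n, Algebra.leftMulMatrix_injective b ?_⟩
  have hM := M.aeval_self_charpoly
  rw [Matrix.charpoly_fin_two, hn] at hM
  simp only [map_add, map_sub, map_mul, map_pow, Polynomial.aeval_X, eq_intCast,
    map_intCast] at hM
  simp only [map_sub, map_mul, map_pow, map_intCast]
  rw [← sub_eq_zero, ← hM]
  abel

/-- The logarithmic embedding of the unit group at a real place `σ`. -/
def logAbsUnits {S : Type*} [CommRing S] (σ : S →+* ℝ) : Additive Sˣ →+ ℝ where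
  toFun u := Real.log |σ (u.toMul : S)|
  map_zero' := by simp
  map_add' u v := by
    have hne (w : Sˣ) : |σ (w : S)| ≠ 0 := abs_ne_zero.2 (w.isUnit.map σ).ne_zero
    rw [toMul_add, Units.val_mul, map_mul, abs_mul, Real.log_mul (hne _) (hne _)]

theorem index_range_unitsMap_mul_le {R S : Type*} [CommRing R] [CommRing S] [Algebra R S]
    [Module.Free ℤ S] [Module.Finite ℤ S] (hrank : finrank ℤ S = 2) {σ : S →+* ℝ}
    (hσ : Injective σ) {ε : Rˣ} (hε : 1 < |σ (algebraMap R S ε)|) :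
    (Units.map (algebraMap R S).toMonoidHom).range.index ≠ 0 ∧
      (Units.map (algebraMap R S).toMonoidHom).range.index * Real.log (3 / 2) ≤
        Real.log |σ (algebraMap R S ε)| := by
  set H := (Units.map (algebraMap R S).toMonoidHom).range
  have hpos (u : Sˣ) : 0 < |σ u| := abs_pos.2 (u.isUnit.map σ).ne_zero
  have hgap (u : Additive Sˣ) (hu : 0 < logAbsUnits σ u) : Real.log (3 / 2) ≤ logAbsUnits σ u := by
    obtain ⟨t, n, htn⟩ := exists_sq_eq_mul_sub_intUnit hrank u.toMul
    refine Real.log_le_log (by norm_num) (three_halves_le_abs_of_sq_eq (t := t) (n := n) ?_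
      ((Real.log_pos_iff (hpos _).le).1 hu))
    rw [← map_pow, htn, map_sub, map_mul, map_intCast, map_intCast]
  have hker : (logAbsUnits σ).ker ≤ H.toAddSubgroup := fun u hu ↦ by
    have habs : |σ (u.toMul : S)| = 1 := Real.eq_one_of_pos_of_log_eq_zero (hpos _) hu
    have hone : (u.toMul : S) = 1 ∨ (u.toMul : S) = -1 := by
      rcases eq_or_eq_neg_of_abs_eq habs with h | h
      · exact .inl (hσ (by rw [h, map_one]))
      · exact .inr (hσ (by rw [h, map_neg, map_one]))
    rcases hone with h | h
    · exact ⟨1, Units.ext (by simp [h])⟩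
    · exact ⟨-1, Units.ext (by simp [h])⟩
  rw [← Subgroup.index_toAddSubgroup]
  exact index_mul_le_of_forall_le (logAbsUnits σ) (Real.log_pos (by norm_num)) hgap hker
    (ε := .ofMul (Units.map (algebraMap R S).toMonoidHom ε)) ⟨ε, rfl⟩ (Real.log_pos hε)

end UnitIndex

section QuadraticOrder

theorem sqrtD_mul_self (D : ℤ) : sqrtD D * sqrtD D = D := by
  unfold sqrtD
  split_ifs with hD
  · rw [← Complex.ofReal_mul, Real.mul_self_sqrt (by exact_mod_cast hD), Complex.ofReal_intCast]
  · rw [mul_mul_mul_comm, Complex.I_mul_I, ← Complex.ofReal_mul, Real.mul_self_sqrt]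
    · simp
    · exact_mod_cast (neg_pos.2 (not_le.1 hD)).le

theorem sqrtD_sq_mul (f : ℕ) (D : ℤ) : sqrtD (f ^ 2 * D) = f * sqrtD D := by
  rcases f.eq_zero_or_pos with rfl | hf
  · simp [sqrtD]
  have hf2 : (0 : ℤ) < (f : ℤ) ^ 2 := by positivity
  have hsqrt (x : ℝ) : √((f : ℝ) ^ 2 * x) = f * √x := by
    rw [Real.sqrt_mul (by positivity), Real.sqrt_sq (Nat.cast_nonneg f)]
  simp only [sqrtD, mul_nonneg_iff_of_pos_left hf2]
  split_ifs
  · push_cast [hsqrt]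
    rfl
  · push_cast [← mul_neg, hsqrt]
    ring

theorem four_dvd_mul_self_sub {D : ℤ} (hD : D % 4 = 0 ∨ D % 4 = 1) : 4 ∣ D * D - D := by
  rw [← mul_sub_one]
  rcases hD with h | h
  · exact (Int.dvd_of_emod_eq_zero h).mul_right _
  · exact (Int.dvd_self_sub_of_emod_eq h).mul_left _

theorem omegaD_mul_self {D : ℤ} (hD : D % 4 = 0 ∨ D % 4 = 1) :
    omegaD D * omegaD D = (-((D * D - D) / 4) : ℤ) • 1 + D • omegaD D := by
  obtain ⟨m, hm⟩ := four_dvd_mul_self_sub hD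
  have hmC : (D : ℂ) * D - D = 4 * m := by exact_mod_cast hm
  rw [hm, Int.mul_ediv_cancel_left m four_ne_zero, zsmul_eq_mul, zsmul_eq_mul, omegaD]
  push_cast
  linear_combination sqrtD_mul_self D / 4 - hmC / 4

theorem omegaD_mem (D : ℤ) : omegaD D ∈ QOrder D :=
  Subring.subset_closure rfl

theorem mem_qOrder_iff {D : ℤ} (hD : D % 4 = 0 ∨ D % 4 = 1) {z : ℂ} :
    z ∈ QOrder D ↔ ∃ x y : ℤ, z = x + y * omegaD D := by
  let φ : QuadraticAlgebra ℤ _ _ →ₐ[ℤ] ℂ := QuadraticAlgebra.lift ⟨omegaD D, omegaD_mul_self hD⟩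
  have hle : QOrder D ≤ φ.range.toSubring :=
    Subring.closure_le.2 (Set.singleton_subset_iff.2 ⟨⟨0, 1⟩, by simp [φ]⟩)
  refine ⟨fun hz ↦ ?_, ?_⟩
  · obtain ⟨u, rfl⟩ := hle hz
    exact ⟨u.re, u.im, by simp [φ]⟩
  · rintro ⟨x, y, rfl⟩
    exact add_mem (intCast_mem _ x) (mul_mem (intCast_mem _ y) (omegaD_mem D))

theorem eq_zero_of_add_mul_omegaD_eq_zero {D : ℤ} (hD : ¬IsSquare D) {x y : ℤ}
    (hxy : (x : ℂ) + y * omegaD D = 0) : x = 0 ∧ y = 0 := by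
  have hsq : (2 * x + y * D) ^ 2 = y ^ 2 * D := by
    have : (y : ℂ) * sqrtD D = -(2 * x + y * D) := by
      rw [omegaD] at hxy
      linear_combination 2 * hxy
    have : (2 * x + y * D : ℂ) ^ 2 = y ^ 2 * D := by
      rw [← neg_sq, ← this, mul_pow, sq (sqrtD D), sqrtD_mul_self]
    exact_mod_cast this
  have hy : y = 0 := by
    by_contra hy
    obtain ⟨k, hk⟩ := (Int.pow_dvd_pow_iff two_ne_zero).1 ⟨D, hsq⟩
    rw [hk, mul_pow] at hsq
    exact hD ⟨k, by rw [← sq, mul_left_cancel₀ (pow_ne_zero 2 hy) hsq]⟩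
  subst hy
  exact ⟨by simpa using hxy, rfl⟩

theorem nonempty_basis_qOrder {D : ℤ} (hD : D % 4 = 0 ∨ D % 4 = 1) (hsq : ¬IsSquare D) :
    Nonempty (Basis (Fin 2) ℤ (QOrder D)) := by
  let ω : QOrder D := ⟨omegaD D, omegaD_mem D⟩
  let φ : QuadraticAlgebra ℤ _ _ →ₐ[ℤ] QOrder D :=
    QuadraticAlgebra.lift (a := -((D * D - D) / 4)) (b := D)
      ⟨ω, Subtype.ext (by simpa using omegaD_mul_self hD)⟩
  have hφ (u) : (φ u : ℂ) = u.re + u.im * omegaD D := by simp [φ, ω]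
  have hinj : Injective φ := (injective_iff_map_eq_zero φ).2 fun u hu ↦ by
    obtain ⟨hre, him⟩ := eq_zero_of_add_mul_omegaD_eq_zero hsq
      ((hφ u).symm.trans (congr_arg Subtype.val hu))
    exact QuadraticAlgebra.ext hre him
  have hsurj : Surjective φ := fun z ↦ by
    obtain ⟨x, y, hxy⟩ := (mem_qOrder_iff hD).1 z.2
    exact ⟨⟨x, y⟩, Subtype.ext ((hφ _).trans hxy.symm)⟩
  exact ⟨(QuadraticAlgebra.basis _ _).map (.ofBijective φ.toLinearMap ⟨hinj, hsurj⟩)⟩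

theorem exists_omegaD_sq_mul (f : ℕ) (D : ℤ) :
    ∃ j : ℤ, omegaD (f ^ 2 * D) = f * omegaD D + j := by
  obtain ⟨k, hk⟩ := even_iff_two_dvd.1 (Int.even_mul_pred_self f)
  have hkC : (f : ℂ) * (f - 1) = 2 * k := by exact_mod_cast hk
  refine ⟨k * D, ?_⟩
  rw [omegaD, omegaD, sqrtD_sq_mul]
  push_cast
  linear_combination D * hkC / 2

theorem sq_mul_emod_four (f : ℤ) {D : ℤ} (hD : D % 4 = 0 ∨ D % 4 = 1) :
    f ^ 2 * D % 4 = 0 ∨ f ^ 2 * D % 4 = 1 := by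
  rcases f.even_or_odd with ⟨m, rfl⟩ | hf
  · exact .inl (Int.emod_eq_zero_of_dvd ⟨m ^ 2 * D, by ring⟩)
  · simpa [Int.mul_emod, Int.sq_mod_four_eq_one_of_odd hf] using hD

theorem mem_qOrder_sq_mul_iff {f : ℕ} {D : ℤ} (hD : D % 4 = 0 ∨ D % 4 = 1) {z : ℂ} :
    z ∈ QOrder (f ^ 2 * D) ↔ ∃ k : ℤ, ∃ t ∈ QOrder D, z = k + f * t := by
  obtain ⟨j, hj⟩ := exists_omegaD_sq_mul f D
  rw [mem_qOrder_iff (sq_mul_emod_four f hD), hj]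
  constructor
  · rintro ⟨x, y, rfl⟩
    refine ⟨x + y * j, y * omegaD D, mul_mem (intCast_mem _ y) (omegaD_mem D), ?_⟩
    push_cast
    ring
  · rintro ⟨k, t, ht, rfl⟩
    obtain ⟨x, y, rfl⟩ := (mem_qOrder_iff hD).1 ht
    refine ⟨k + f * x - y * j, y, ?_⟩
    push_cast
    ring

theorem exists_realEmbedding_qOrder {D : ℤ} (hD : 0 ≤ D) :
    ∃ σ : QOrder D →+* ℝ, ∀ z, (σ z : ℂ) = z := by
  have hle : QOrder D ≤ Complex.ofRealHom.range :=
    Subring.closure_le.2 <| Set.singleton_subset_iff.2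
      ⟨(D + √D) / 2, by simp [omegaD, sqrtD, hD]⟩
  let e := RingEquiv.ofBijective Complex.ofRealHom.rangeRestrict
    ⟨fun _ _ h ↦ Complex.ofReal_injective (congr_arg Subtype.val h),
      Complex.ofRealHom.rangeRestrict_surjective⟩
  exact ⟨e.symm.toRingHom.comp (Subring.inclusion hle), fun z ↦
    congr_arg Subtype.val (e.apply_symm_apply (Subring.inclusion hle z))⟩

theorem exists_unit_qOrder {Δ n : ℤ} {s : ℤˣ} (hΔ : Δ = n ^ 2 - 4 * s) :
    ∃ ε : (QOrder Δ)ˣ, ((ε : QOrder Δ) : ℂ) = (n + sqrtD Δ) / 2 := by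
  obtain ⟨k, hk⟩ : (2 : ℤ) ∣ n - Δ := by
    obtain ⟨j, hj⟩ := even_iff_two_dvd.1 (Int.even_mul_pred_self n)
    exact ⟨2 * s - j, by rw [hΔ]; linear_combination -hj⟩
  have hkC : (n : ℂ) - Δ = 2 * k := by exact_mod_cast hk
  let ε : QOrder Δ := ⟨omegaD Δ + k, add_mem (omegaD_mem Δ) (intCast_mem _ k)⟩
  have hε : (ε : ℂ) = (n + sqrtD Δ) / 2 := by
    simp only [ε, omegaD]
    linear_combination -hkC / 2
  have hnorm : ε * (n - ε) = ((s : ℤ) : QOrder Δ) := by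
    have hΔC : (Δ : ℂ) = n ^ 2 - 4 * (s : ℤ) := by exact_mod_cast hΔ
    refine Subtype.ext ?_
    push_cast
    rw [hε]
    linear_combination -sqrtD_mul_self Δ / 4 - hΔC / 4
  have hunit : IsUnit ε := by
    refine isUnit_of_mul_isUnit_left (y := n - ε) ?_
    rw [hnorm]
    exact s.isUnit.map (Int.castRingHom _)
  exact ⟨hunit.unit, hε⟩

end QuadraticOrder

section ClassNumber

theorem classNumber_eq_card_pic (D : ℤ) :
    classNumber D = Nat.card (CommRing.Pic (QOrder D)) :=
  Nat.card_congr (ClassGroup.equivPic (QOrder D)).toEquiv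

theorem finite_pic_qOrder {D : ℤ} (hD : D % 4 = 0 ∨ D % 4 = 1) (hsq : ¬IsSquare D) :
    Finite (CommRing.Pic (QOrder D)) := by
  obtain ⟨b⟩ := nonempty_basis_qOrder hD hsq
  have : Module.Free ℤ (QOrder D) := .of_basis b
  have : Module.Finite ℤ (QOrder D) := .of_basis b
  exact finite_pic (QOrder D)

theorem classNumber_pos {D : ℤ} (hD : D % 4 = 0 ∨ D % 4 = 1) (hsq : ¬IsSquare D) :
    0 < classNumber D := by
  have := finite_pic_qOrder hD hsq
  rw [classNumber_eq_card_pic]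
  exact Nat.card_pos

theorem not_isSquare_sq_mul {f : ℕ} (hf : f ≠ 0) {D : ℤ} (hsq : ¬IsSquare D) :
    ¬IsSquare ((f : ℤ) ^ 2 * D) := by
  rintro ⟨k, hk⟩
  obtain ⟨j, rfl⟩ := (Int.pow_dvd_pow_iff two_ne_zero).1 ⟨D, (sq k).trans hk.symm⟩
  have hf2 : (f : ℤ) ^ 2 ≠ 0 := pow_ne_zero 2 (Nat.cast_ne_zero.2 hf)
  exact hsq ⟨j, mul_left_cancel₀ hf2 (by rw [hk]; ring)⟩

theorem classNumber_sq_mul_mul_totient_le {D : ℤ} (hD : D % 4 = 0 ∨ D % 4 = 1)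
    (hsq : ¬IsSquare D) {f : ℕ} (hf : f ≠ 0) :
    classNumber (f ^ 2 * D) * f.totient ≤ classNumber D * f ^ 2 := by
  obtain ⟨b⟩ := nonempty_basis_qOrder hD hsq
  have : Module.Free ℤ (QOrder D) := .of_basis b
  have : Module.Finite ℤ (QOrder D) := .of_basis b
  have hrank : finrank ℤ (QOrder D) = 2 := finrank_eq_card_basis b
  have := finite_pic_qOrder hD hsq
  obtain ⟨_, _, hconductor, -⟩ :=
    exists_algebra_of_forall_mem_iff fun _ ↦ mem_qOrder_sq_mul_iff (f := f) hD
  have hle := hconductor.card_pic_mul_totient_le hf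
  rwa [hrank, ← classNumber_eq_card_pic, ← classNumber_eq_card_pic] at hle

theorem totient_mul_log_le_classNumber_mul_log {D : ℤ} (hD : D % 4 = 0 ∨ D % 4 = 1)
    (hD0 : 0 ≤ D) (hsq : ¬IsSquare D) {f : ℕ} (hf : f ≠ 0) {ε : (QOrder (f ^ 2 * D))ˣ} {x : ℝ}
    (hεx : ((ε : QOrder (f ^ 2 * D)) : ℂ) = x) (hx : 1 < x) :
    f.totient * Real.log (3 / 2) ≤ classNumber (f ^ 2 * D) * Real.log x := by
  obtain ⟨b⟩ := nonempty_basis_qOrder hD hsq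
  have : Module.Free ℤ (QOrder D) := .of_basis b
  have : Module.Finite ℤ (QOrder D) := .of_basis b
  have hrank : finrank ℤ (QOrder D) = 2 := finrank_eq_card_basis b
  have := finite_pic_qOrder (sq_mul_emod_four f hD) (not_isSquare_sq_mul hf hsq)
  obtain ⟨_, _, hconductor, hcoe⟩ :=
    exists_algebra_of_forall_mem_iff fun _ ↦ mem_qOrder_sq_mul_iff (f := f) hD
  obtain ⟨σ, hσ⟩ := exists_realEmbedding_qOrder hD0
  have hσinj : Injective σ := fun y z hyz ↦ Subtype.ext (by rw [← hσ, ← hσ, hyz])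
  have hσε : |σ (algebraMap (QOrder (f ^ 2 * D)) (QOrder D) ε)| = x := by
    have h : σ (algebraMap (QOrder (f ^ 2 * D)) (QOrder D) ε) = x :=
      Complex.ofReal_injective (by rw [hσ, hcoe, hεx])
    rw [h, abs_of_pos (by linarith)]
  obtain ⟨hindex, hindex_le⟩ := index_range_unitsMap_mul_le hrank hσinj (hx.trans_eq hσε.symm)
  have htotient := hconductor.totient_pow_le hf hindex
  rw [hrank, pow_one, ← classNumber_eq_card_pic] at htotient
  have : 0 < Real.log (3 / 2) := Real.log_pos (by norm_num)
  calc
    f.totient * Real.log (3 / 2) ≤ classNumber (f ^ 2 * D) *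
        (Units.map (algebraMap (QOrder (f ^ 2 * D)) (QOrder D)).toMonoidHom).range.index *
          Real.log (3 / 2) := by
      gcongr
      exact_mod_cast htotient
    _ ≤ classNumber (f ^ 2 * D) * Real.log x := by
      rw [mul_assoc, ← hσε]
      gcongr

end ClassNumber

section LogarithmicBounds

theorem three_le_log_add_twenty {x : ℝ} (hx : 1 ≤ x) : 3 ≤ Real.log (x + 20) := by
  rw [Real.le_log_iff_exp_le (by linarith)]
  calc
    Real.exp 3 = Real.exp 1 ^ 3 := by rw [← Real.exp_nat_mul]; norm_num
    _ ≤ 2.7182818286 ^ 3 := pow_le_pow_left₀ (Real.exp_pos _).le Real.exp_one_lt_d9.le 3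
    _ ≤ x + 20 := by norm_num; linarith

theorem one_le_log {x : ℝ} (hx : 3 ≤ x) : 1 ≤ Real.log x := by
  rw [Real.le_log_iff_exp_le (by linarith)]
  linarith [Real.exp_one_lt_d9]

theorem natLog_two_add_one_le {f : ℕ} {X : ℝ} (hX : 3 ≤ X) (hf : Real.log f ≤ X) :
    (Nat.log 2 f + 1 : ℝ) ≤ 2 * X := by
  have hlog : (Nat.log 2 f : ℝ) * Real.log 2 ≤ Real.log f :=
    (le_div_iff₀ (Real.log_pos one_lt_two)).1 (Real.natLog_le_logb f 2)
  have := Real.log_two_gt_d9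
  nlinarith

theorem abs_log_sub_log_le {x y a X : ℝ} (hx : 0 < x) (hy : 0 < y) (ha : 1 ≤ a)
    (hX : 1 ≤ Real.log X) (hxy : x ≤ a * y * X) (hyx : y ≤ a * x * X ^ 2) :
    |Real.log x - Real.log y| ≤ (Real.log a + 2) * Real.log X := by
  have hX0 : X ≠ 0 := by
    rintro rfl
    norm_num at hX
  have ha0 : a ≠ 0 := by positivity
  have hloga := Real.log_nonneg ha
  have hupper : Real.log x ≤ Real.log a + Real.log y + Real.log X := by
    rw [← Real.log_mul ha0 hy.ne', ← Real.log_mul (by positivity) hX0]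
    exact Real.log_le_log hx hxy
  have hlower : Real.log y ≤ Real.log a + Real.log x + 2 * Real.log X := by
    have hpow : Real.log (X ^ 2) = 2 * Real.log X := by rw [Real.log_pow, Nat.cast_two]
    rw [← hpow, ← Real.log_mul ha0 hx.ne', ← Real.log_mul (by positivity) (pow_ne_zero 2 hX0)]
    exact Real.log_le_log hy hyx
  rw [abs_le]
  constructor <;> nlinarith

theorem one_lt_add_sqrt_div_two {n Δ : ℝ} (hn : 1 ≤ n) (hΔ : 1 < Δ) : 1 < (n + √Δ) / 2 := by
  have : 1 < √Δ := Real.lt_sqrt_of_sq_lt (by linarith)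
  linarith

theorem add_sqrt_div_two_le {n Δ : ℝ} (hn : 0 ≤ n) (hΔ : Δ ≤ n ^ 2 + 4) :
    (n + √Δ) / 2 ≤ n + 1 := by
  have : √Δ ≤ n + 2 := Real.sqrt_le_iff.2 ⟨by linarith, by nlinarith⟩
  linarith

end LogarithmicBounds

section Comparison

theorem classNumber_sq_mul_le {D : ℤ} (hD : D % 4 = 0 ∨ D % 4 = 1) (hsq : ¬IsSquare D) {f : ℕ}
    (hf : f ≠ 0) {X : ℝ} (hX : 3 ≤ X) (hfX : Real.log f ≤ X) :
    (classNumber (f ^ 2 * D) : ℝ) ≤ classNumber D * (f * (2 * X)) := by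
  have hf0 : (0 : ℝ) < f := by exact_mod_cast Nat.pos_of_ne_zero hf
  have htotient : (f : ℝ) ≤ f.totient * (2 * X) :=
    calc
      (f : ℝ) ≤ f.totient * (Nat.log 2 f + 1) := by
        exact_mod_cast le_totient_mul_log_two_add_one hf
      _ ≤ f.totient * (2 * X) := by
        gcongr
        exact natLog_two_add_one_le hX hfX
  have hclass : (classNumber (f ^ 2 * D) * f.totient : ℝ) ≤ classNumber D * f ^ 2 := by
    exact_mod_cast classNumber_sq_mul_mul_totient_le hD hsq hf
  refine le_of_mul_le_mul_right ?_ hf0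
  calc
    (classNumber (f ^ 2 * D) * f : ℝ) ≤ classNumber (f ^ 2 * D) * (f.totient * (2 * X)) := by
      gcongr
    _ = classNumber (f ^ 2 * D) * f.totient * (2 * X) := by ring
    _ ≤ classNumber D * f ^ 2 * (2 * X) := by gcongr
    _ = classNumber D * (f * (2 * X)) * f := by ring

theorem conductor_le_classNumber_mul {D : ℤ} (hD : D % 4 = 0 ∨ D % 4 = 1) (hD0 : 0 ≤ D)
    (hsq : ¬IsSquare D) {f : ℕ} (hf : f ≠ 0) {ε : (QOrder (f ^ 2 * D))ˣ} {x : ℝ}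
    (hεx : ((ε : QOrder (f ^ 2 * D)) : ℂ) = x) (hx : 1 < x) {X : ℝ} (hX : 3 ≤ X)
    (hxX : Real.log x ≤ X) (hfX : Real.log f ≤ X) :
    (f : ℝ) ≤ 6 * classNumber (f ^ 2 * D) * X ^ 2 := by
  have hlog : 1 / 3 ≤ Real.log (3 / 2) := by
    have := Real.one_sub_inv_le_log_of_pos (x := 3 / 2) (by norm_num)
    norm_num at this ⊢
    exact this
  have htotient : (f.totient : ℝ) ≤ classNumber (f ^ 2 * D) * (3 * X) := by
    have hle := totient_mul_log_le_classNumber_mul_log hD hD0 hsq hf hεx hx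
    have hmono : classNumber (f ^ 2 * D) * Real.log x ≤ classNumber (f ^ 2 * D) * X := by gcongr
    nlinarith [Nat.cast_nonneg (α := ℝ) f.totient]
  calc
    (f : ℝ) ≤ f.totient * (Nat.log 2 f + 1) := by
      exact_mod_cast le_totient_mul_log_two_add_one hf
    _ ≤ classNumber (f ^ 2 * D) * (3 * X) * (2 * X) := by
      gcongr
      exact natLog_two_add_one_le hX hfX
    _ = 6 * classNumber (f ^ 2 * D) * X ^ 2 := by ring

theorem conductor_le_add_two {D n f : ℤ} {s : ℤˣ} (hD : 0 < D) (hn : 0 ≤ n)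
    (hΔ : f ^ 2 * D = n ^ 2 - 4 * s) : f ≤ n + 2 := by
  have hs : -1 ≤ (s : ℤ) := by rcases Int.units_eq_one_or s with rfl | rfl <;> norm_num
  refine le_of_sq_le_sq ?_ (by positivity)
  calc
    f ^ 2 ≤ f ^ 2 * D := le_mul_of_one_le_right (sq_nonneg f) hD
    _ ≤ (n + 2) ^ 2 := by linarith

theorem le_five_mul_mul_conductor {D n f : ℤ} {s : ℤˣ} (hD : 0 < D) (hf : 0 < f)
    (hΔ : f ^ 2 * D = n ^ 2 - 4 * s) : n ≤ 5 * D * f := by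
  have hs : (s : ℤ) ≤ 1 := by rcases Int.units_eq_one_or s with rfl | rfl <;> norm_num
  have hfD : 0 < f ^ 2 * D := by positivity
  refine le_of_sq_le_sq ?_ (by positivity)
  calc
    n ^ 2 ≤ 5 * (f ^ 2 * D) := by linarith
    _ ≤ 25 * D * (f ^ 2 * D) := by gcongr; linarith
    _ = (5 * D * f) ^ 2 := by ring

theorem one_lt_of_not_isSquare {D : ℤ} (hD : 0 < D) (hsq : ¬IsSquare D) : 1 < D := by
  refine lt_of_le_of_ne hD ?_
  rintro rfl
  exact hsq IsSquare.one

theorem exists_unit_qOrder_log_le {Δ n : ℤ} {s : ℤˣ} (hn : 1 ≤ n) (h1 : 1 < Δ)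
    (hΔ : Δ = n ^ 2 - 4 * s) :
    ∃ (ε : (QOrder Δ)ˣ) (x : ℝ), ((ε : QOrder Δ) : ℂ) = x ∧ 1 < x ∧
      Real.log x ≤ Real.log (n + 20) := by
  obtain ⟨ε, hε⟩ := exists_unit_qOrder hΔ
  have hs : -1 ≤ (s : ℤ) := by rcases Int.units_eq_one_or s with rfl | rfl <;> norm_num
  have hnR : (1 : ℝ) ≤ n := by exact_mod_cast hn
  have hx : 1 < ((n : ℝ) + √Δ) / 2 := one_lt_add_sqrt_div_two hnR (by exact_mod_cast h1)
  have hle : ((n : ℝ) + √Δ) / 2 ≤ n + 1 :=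
    add_sqrt_div_two_le (by positivity) (by exact_mod_cast (by linarith : Δ ≤ n ^ 2 + 4))
  refine ⟨ε, (n + √Δ) / 2, ?_, hx, Real.log_le_log (by positivity) (by linarith)⟩
  rw [hε, sqrtD, if_pos (by positivity)]
  push_cast
  rfl

theorem abs_log_classNumber_sub_log_le {D : ℤ} (hD : D % 4 = 0 ∨ D % 4 = 1) (hD0 : 0 < D)
    (hsq : ¬IsSquare D) {n : ℤ} {s : ℤˣ} {f : ℕ} (hn : 1 ≤ n) (hf : f ≠ 0)
    (hΔ : f ^ 2 * D = n ^ 2 - 4 * s) :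
    |Real.log (classNumber (f ^ 2 * D)) - Real.log n| ≤
      (Real.log (30 * D * classNumber D : ℤ) + 2) * Real.log (Real.log (n + 20)) := by
  have hΔ1 : 1 < (f : ℤ) ^ 2 * D :=
    one_lt_of_not_isSquare (by positivity) (not_isSquare_sq_mul hf hsq)
  obtain ⟨ε, x, hεx, hx, hxX⟩ := exists_unit_qOrder_log_le hn hΔ1 hΔ
  have hnR : (1 : ℝ) ≤ n := by exact_mod_cast hn
  have hX := three_le_log_add_twenty hnR
  set X := Real.log (n + 20)
  have hfn : (f : ℝ) ≤ n + 2 := by exact_mod_cast conductor_le_add_two hD0 (by positivity) hΔ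
  have hnf : (n : ℝ) ≤ 5 * D * f := by
    exact_mod_cast le_five_mul_mul_conductor hD0 (by positivity) hΔ
  have hfX : Real.log f ≤ X := Real.log_le_log (by positivity) (by linarith)
  have hupper := classNumber_sq_mul_le hD hsq hf hX hfX
  have hlower := conductor_le_classNumber_mul hD hD0.le hsq hf hεx hx hX hxX hfX
  have hh : (1 : ℝ) ≤ classNumber (f ^ 2 * D) := by
    exact_mod_cast classNumber_pos (sq_mul_emod_four f hD) (not_isSquare_sq_mul hf hsq)
  have hK : (1 : ℝ) ≤ classNumber D := by exact_mod_cast classNumber_pos hD hsq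
  have hD1 : (1 : ℝ) ≤ D := by exact_mod_cast hD0
  have hDK : (1 : ℝ) ≤ D * classNumber D := one_le_mul_of_one_le_of_one_le hD1 hK
  push_cast
  refine abs_log_sub_log_le (by positivity) (by positivity) (by linarith) (one_le_log hX) ?_ ?_
  · calc
      (classNumber (f ^ 2 * D) : ℝ) ≤ classNumber D * (3 * n * (2 * X)) := by
        refine hupper.trans ?_
        gcongr
        linarith
      _ = 6 * (1 * classNumber D) * n * X := by ring
      _ ≤ 30 * (D * classNumber D) * n * X := by gcongr; norm_num
      _ = 30 * D * classNumber D * n * X := by ring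
  · calc
      (n : ℝ) ≤ 5 * D * (6 * classNumber (f ^ 2 * D) * X ^ 2) := hnf.trans (by gcongr)
      _ = 30 * D * 1 * classNumber (f ^ 2 * D) * X ^ 2 := by ring
      _ ≤ 30 * D * classNumber D * classNumber (f ^ 2 * D) * X ^ 2 := by gcongr

theorem exists_eq_sq_mul_discriminant {Δ m f : ℤ} (hΔ : Δ % 4 = 0 ∨ Δ % 4 = 1) (hf : f ≠ 0)
    (h : Δ = f ^ 2 * m) :
    ∃ (g : ℕ) (D : ℤ), g ≠ 0 ∧ Δ = g ^ 2 * D ∧ (D % 4 = 0 ∨ D % 4 = 1) ∧ (D = m ∨ D = 4 * m) := by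
  rcases f.even_or_odd' with ⟨k, rfl | hk⟩
  · refine ⟨k.natAbs, 4 * m, by simpa using hf, ?_, .inl (Int.mul_emod_right 4 m), .inr rfl⟩
    rw [Int.natAbs_sq, h]
    ring
  · refine ⟨f.natAbs, m, Int.natAbs_ne_zero.2 hf, by rw [Int.natAbs_sq, h], ?_, .inl rfl⟩
    simpa [h, Int.mul_emod, Int.sq_mod_four_eq_one_of_odd ⟨k, hk⟩] using hΔ

end Comparison

theorem effective_classNumber_bound_bounded_fundamental_general (N : ℤ) :
    ∃ C : ℝ, 0 < C ∧
      ∀ n s Δ m f : ℤ, 1 ≤ n → (s = 1 ∨ s = -1) → Δ = n ^ 2 - 4 * s →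
        0 < Δ → ¬ IsSquare Δ → Δ = f ^ 2 * m → m ≤ N →
        |Real.log (classNumber Δ) - Real.log n| ≤
          C * Real.log (Real.log ((n : ℝ) + 20)) := by
  let c (D : ℤ) : ℝ := Real.log (30 * D * classNumber D : ℤ)
  have hc (D : ℤ) : 0 ≤ c D := Real.log_intCast_nonneg _
  refine ⟨(∑ D ∈ Finset.Icc 1 (4 * N), c D) + 2,
    add_pos_of_nonneg_of_pos (Finset.sum_nonneg fun D _ ↦ hc D) two_pos,
    fun n s Δ m f hn hs hΔ hpos hsq hfm hmN ↦ ?_⟩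
  obtain ⟨s, rfl⟩ : IsUnit s := Int.isUnit_iff.2 hs
  have hΔ4 : Δ % 4 = 0 ∨ Δ % 4 = 1 := by
    have := sq_mul_emod_four n (D := 1) (.inr rfl)
    omega
  have hf : f ≠ 0 := by
    rintro rfl
    simp [hfm] at hpos
  obtain ⟨g, D, hg, rfl, hD, hDm⟩ := exists_eq_sq_mul_discriminant hΔ4 hf hfm
  have hD0 : 0 < D := pos_of_mul_pos_right hpos (sq_nonneg _)
  have hDsq : ¬IsSquare D := fun h ↦ hsq ((IsSquare.sq _).mul h)
  have hDN : D ∈ Finset.Icc 1 (4 * N) := Finset.mem_Icc.2 ⟨hD0, by omega⟩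
  refine (abs_log_classNumber_sub_log_le hD hD0 hDsq hn hg hΔ).trans ?_
  have hX := one_le_log (three_le_log_add_twenty (x := n) (by exact_mod_cast hn))
  gcongr
  exact Finset.single_le_sum (fun D _ ↦ hc D) hDN

/-- For every bound `N > 0` there is an effective constant `C(N) > 0` such that for any
unit-generated-order discriminant `Δ = n² ∓ 4 > 0` (nonsquare), written as `Δ = f²Δ₀`
with `Δ₀` fundamental and `f ≥ 1` the conductor, if `Δ₀ ≤ N` then
`|log h_Δ - log n| ≤ C(N) · log log (n + 20)`. -/
theorem effective_classNumber_bound_bounded_fundamental (N : ℤ) (hN : 0 < N) :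
    ∃ C : ℝ, 0 < C ∧
      ∀ n s Δ Δ₀ f : ℤ, 1 ≤ n → (s = 1 ∨ s = -1) → Δ = n ^ 2 - 4 * s →
        0 < Δ → ¬ IsSquare Δ →
        IsFundamentalDiscriminant Δ₀ → 1 ≤ f → Δ = f ^ 2 * Δ₀ → Δ₀ ≤ N →
        |Real.log (classNumber Δ) - Real.log n| ≤
          C * Real.log (Real.log ((n : ℝ) + 20)) := by
  obtain ⟨C, hC, h⟩ := effective_classNumber_bound_bounded_fundamental_general N
  exact ⟨C, hC, fun n s Δ Δ₀ f hn hs hΔ hpos hsq _ _ ↦ h n s Δ Δ₀ f hn hs hΔ hpos hsq⟩
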